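/- The element ∑_{0≤i≤3, 0≤j≤2} T_{ij} ⊗ T^{ij} of R ⊗_ℚ R, where T^{ij} := T_{3−i,2−j} − T_{4−i,1−j} + T_{5−i,−j} (with T_{pq} = 0 for p > 3 or q < 0), has the reproducing property of the diagonal class: for every x ∈ R, ∑_{0≤i≤3, 0≤j≤2} ⟨x, T_{ij}⟩ · T^{ij} = x. -/

import Mathlib

/-!
`R` has the shape of the cohomology of a `ℙ²`-bundle over `ℙ³`: over `ℚ[a]/(a⁴)` it is generated by
one element `ξ = H` satisfying a monic equation. Let `D₀ = 1, D₁ = ξ - a, D₂ = ξ² - aξ + a², D₃ = 0`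
be the successive values in Horner's scheme for this equation, so that `ξ Dₘ` and `Dₘ₊₁` differ by
an element of `ℚ[a]`. Since `∫` kills `ℚ[a] ξʲ` for `j < 2`, this lets one move powers of `ξ` into
the index: `∫ α ξʲ⁺¹ Dₘ = ∫ α ξʲ Dₘ₊₁` for `α ∈ ℚ[a]`. Therefore `∫ α ξʲ Dₘ` is `∫ α ξ²` if
`j + m = 2` and `0` otherwise. Since `∫ aᵐ ξ²` is `1` for `m = 3` and `0` otherwise, the elements
`Tⁱʲ = a³⁻ⁱ D₂₋ⱼ` are dual to the generators `Tᵢⱼ = aⁱ ξʲ`.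
-/

open MvPolynomial

noncomputable section

/-- The polynomial ring `ℚ[a, H]` in two variables. -/
abbrev P : Type := MvPolynomial (Fin 2) ℚ

/-- The variable `a` (hyperplane class of the Grassmannian). -/
def aP : P := X 0

/-- The variable `H` (pullback of the hyperplane class of `ℙ³`). -/
def HP : P := X 1

/-- The ideal `(a⁴, H³ − aH² + a²H − a³)`. -/
def J : Ideal P := Ideal.span {aP ^ 4, HP ^ 3 - aP * HP ^ 2 + aP ^ 2 * HP - aP ^ 3}

/-- The cohomology ring `R = ℚ[a,H]/(a⁴, H³ − aH² + a²H − a³)`. -/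
abbrev R : Type := P ⧸ J

/-- `T i j` is the image of `aⁱHʲ` in `R`. -/
def T (i j : ℕ) : R := Ideal.Quotient.mk J (aP ^ i * HP ^ j)

/-- `Tz p q` is the image of `aᵖHᑫ` in `R` for integer exponents, with the
convention that it is `0` whenever `p > 3` or `q < 0`. -/
def Tz (p q : ℤ) : R :=
  if 3 < p ∨ q < 0 then 0 else Ideal.Quotient.mk J (aP ^ p.toNat * HP ^ q.toNat)

/-- `Tdual i j = T_{3−i,2−j} − T_{4−i,1−j} + T_{5−i,−j}` (with the convention
`T_{pq} = 0` for `p > 3` or `q < 0`). -/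
def Tdual (i j : ℕ) : R :=
  Tz (3 - (i : ℤ)) (2 - (j : ℤ)) - Tz (4 - (i : ℤ)) (1 - (j : ℤ))
    + Tz (5 - (i : ℤ)) (-(j : ℤ))

section DualFamily

variable {k M ι : Type*} [CommRing k] [AddCommGroup M] [Module k M] [Fintype ι] [DecidableEq ι]

theorem sum_apply_smul_eq_self_of_dual {B : LinearMap.BilinForm k M} (hB : B.IsSymm)
    {e f : ι → M} (hspan : Submodule.span k (Set.range e) = ⊤)
    (hdual : ∀ p q, B (f p) (e q) = if p = q then 1 else 0) (x : M) :
    ∑ p, B x (e p) • f p = x := by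
  -- The defect `y` is orthogonal to the spanning family, hence to the dual one as well, and the
  -- pairings of `y` with the latter are its coordinates with respect to the former.
  set y := ∑ p, B x (e p) • f p - x with hy
  have hBy : B y = 0 := LinearMap.ext_on_range hspan fun q => by simp [hy, hdual]
  obtain ⟨c, hc⟩ :=
    (span_range_eq_top_iff_surjective_fintypeLinearCombination k e).1 hspan y
  have hc0 (p : ι) : c p = 0 := calc
    c p = B (f p) y := by simp [← hc, Fintype.linearCombination_apply, hdual]
    _ = B y (f p) := hB.eq _ _
    _ = 0 := by rw [hBy, LinearMap.zero_apply]
  refine sub_eq_zero.1 (hy.symm.trans ?_)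
  simp [← hc, Fintype.linearCombination_apply, hc0]

end DualFamily

section Horner

variable {S : Type*} [CommRing S]

/-- The `m`-th value in Horner's scheme at `ξ` for the monic polynomial with lower coefficients
`c 0, c 1, …` in order of decreasing degree, namely `ξ ^ m + c 0 * ξ ^ (m - 1) + ⋯ + c (m - 1)`.
In the cohomology of a projective bundle these are the classes dual to the powers of `ξ`. -/
def hornerValue (c : ℕ → S) (ξ : S) : ℕ → S
  | 0 => 1
  | m + 1 => ξ * hornerValue c ξ m + c m

variable {k N : Type*} [CommRing k] [Algebra k S] [AddCommGroup N] [Module k N]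
  {A : Subalgebra k S} {c : ℕ → S} {ξ α : S} {d : ℕ} {φ : S →ₗ[k] N}

theorem map_mul_pow_add_mul_hornerValue (hc : ∀ m, c m ∈ A)
    (hφ : ∀ α ∈ A, ∀ j < d, φ (α * ξ ^ j) = 0) (hα : α ∈ A) {j t : ℕ} (hjt : j + t ≤ d) (m : ℕ) :
    φ (α * (ξ ^ (j + t) * hornerValue c ξ m)) = φ (α * (ξ ^ j * hornerValue c ξ (m + t))) := by
  induction t generalizing m with
  | zero => rfl
  | succ t ih =>
    have hlow : φ (α * c m * ξ ^ (j + t)) = 0 := hφ _ (A.mul_mem hα (hc m)) _ (by omega)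
    calc φ (α * (ξ ^ (j + (t + 1)) * hornerValue c ξ m))
        = φ (α * (ξ ^ (j + t) * hornerValue c ξ (m + 1)) - α * c m * ξ ^ (j + t)) := by
          rw [hornerValue]; ring_nf
      _ = φ (α * (ξ ^ (j + t) * hornerValue c ξ (m + 1))) := by rw [map_sub, hlow, sub_zero]
      _ = φ (α * (ξ ^ j * hornerValue c ξ (m + (t + 1)))) := by
          rw [ih (by omega), Nat.add_right_comm, Nat.add_assoc]

theorem map_mul_pow_mul_hornerValue (hc : ∀ m, c m ∈ A) (hξ : hornerValue c ξ (d + 1) = 0)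
    (hφ : ∀ α ∈ A, ∀ j < d, φ (α * ξ ^ j) = 0) (hα : α ∈ A) {j m : ℕ} (hj : j ≤ d)
    (hm : m ≤ d) :
    φ (α * (ξ ^ j * hornerValue c ξ m)) = if j + m = d then φ (α * ξ ^ d) else 0 := by
  obtain hle | hlt := le_or_gt (j + m) d
  · have hshift : φ (α * (ξ ^ j * hornerValue c ξ m)) = φ (α * ξ ^ (j + m)) := by
      have := map_mul_pow_add_mul_hornerValue hc hφ hα hle 0
      rw [zero_add] at this
      rw [← this, hornerValue, mul_one]
    rw [hshift]
    split_ifs with hd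
    · rw [hd]
    · exact hφ α hα _ (by omega)
  · obtain ⟨t, ht⟩ : ∃ t, m + t = d + 1 := ⟨d + 1 - m, by omega⟩
    obtain ⟨i, rfl⟩ : ∃ i, j = i + t := ⟨j - t, by omega⟩
    rw [map_mul_pow_add_mul_hornerValue hc hφ hα hj, ht, hξ, mul_zero, mul_zero, map_zero,
      if_neg (by omega)]

end Horner

section ProjectiveBundle

theorem map_adjoin_singleton_mul_eq_zero {k S N : Type*} [CommRing k] [CommRing S] [Algebra k S]
    [AddCommGroup N] [Module k N] {φ : S →ₗ[k] N} {a y α : S} (hφ : ∀ i, φ (a ^ i * y) = 0)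
    (hα : α ∈ Algebra.adjoin k {a}) : φ (α * y) = 0 := by
  rw [Algebra.adjoin_singleton_eq_range_aeval] at hα
  obtain ⟨p, rfl⟩ := hα
  simp [Polynomial.aeval_eq_sum_range, Finset.sum_mul, hφ]

variable {k S : Type*} [CommRing k] [CommRing S] [Algebra k S] {a ξ : S} {n d : ℕ} {φ : S →ₗ[k] k}

theorem map_pow_mul_pow_eq_ite (ha : a ^ (n + 1) = 0)
    (hφ : ∀ i j, i ≤ n → j ≤ d → φ (a ^ i * ξ ^ j) = if i = n ∧ j = d then 1 else 0)
    (i : ℕ) {j : ℕ} (hj : j ≤ d) :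
    φ (a ^ i * ξ ^ j) = if i = n ∧ j = d then 1 else 0 := by
  obtain hi | hi := le_or_gt i n
  · exact hφ i j hi hj
  · rw [pow_eq_zero_of_le hi ha, zero_mul, map_zero, if_neg (by omega)]

/-- In the cohomology of a `ℙᵈ`-bundle over `ℙⁿ`, `a` is the hyperplane class of the base, `ξ` the
relative one, and `c m` is up to sign the Chern class of degree `m + 1`. The ring `R` has `n = 3`,
`d = 2` and `c m = (-a) ^ (m + 1)`. -/
theorem diagonal_class_reproduces_general {c : ℕ → S} (hc : ∀ m, c m ∈ Algebra.adjoin k {a})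
    (ha : a ^ (n + 1) = 0) (hξ : hornerValue c ξ (d + 1) = 0)
    (hspan : Submodule.span k
      (Set.range fun p : Fin (n + 1) × Fin (d + 1) => a ^ p.1.val * ξ ^ p.2.val) = ⊤)
    (hφ : ∀ i j, i ≤ n → j ≤ d → φ (a ^ i * ξ ^ j) = if i = n ∧ j = d then 1 else 0) (x : S) :
    ∑ i ∈ Finset.range (n + 1), ∑ j ∈ Finset.range (d + 1),
      φ (x * (a ^ i * ξ ^ j)) • (a ^ (n - i) * hornerValue c ξ (d - j)) = x := by
  have hlow (α : S) (hα : α ∈ Algebra.adjoin k {a}) (j : ℕ) (hj : j < d) : φ (α * ξ ^ j) = 0 :=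
    map_adjoin_singleton_mul_eq_zero
      (fun i => by rw [map_pow_mul_pow_eq_ite ha hφ i hj.le, if_neg (by omega)]) hα
  have hdual (p q : Fin (n + 1) × Fin (d + 1)) :
      φ (a ^ (n - p.1.val) * hornerValue c ξ (d - p.2.val) * (a ^ q.1.val * ξ ^ q.2.val)) =
        if p = q then 1 else 0 := by
    have ha_mem : a ^ (n - p.1.val + q.1.val) ∈ Algebra.adjoin k {a} :=
      pow_mem (Algebra.self_mem_adjoin_singleton k a) _
    rw [mul_mul_mul_comm, ← pow_add, mul_comm (hornerValue _ _ _),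
      map_mul_pow_mul_hornerValue hc hξ hlow ha_mem (by omega) (by omega),
      map_pow_mul_pow_eq_ite ha hφ _ le_rfl, ← ite_and]
    have := p.1.is_le
    have := p.2.is_le
    congr 1
    simp only [Prod.ext_iff, Fin.ext_iff, eq_iff_iff, and_true]
    omega
  let B : LinearMap.BilinForm k S := (LinearMap.mul k S).compr₂ φ
  have hB : B.IsSymm := ⟨fun y z => congrArg φ (mul_comm y z)⟩
  simp_rw [Finset.sum_range, ← Fintype.sum_prod_type']
  exact sum_apply_smul_eq_self_of_dual hB hspan hdual x

end ProjectiveBundle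

/-- The class of `a` in `R`. -/
def aR : R := Ideal.Quotient.mk J aP

/-- The class of `H` in `R`. -/
def HR : R := Ideal.Quotient.mk J HP

theorem T_eq_pow_mul_pow (i j : ℕ) : T i j = aR ^ i * HR ^ j := by
  simp only [T, aR, HR, map_mul, map_pow]

theorem aR_pow_four : aR ^ 4 = 0 := by
  rw [aR, ← map_pow]
  exact Ideal.Quotient.eq_zero_iff_mem.2 (Ideal.subset_span (by simp))

theorem neg_aR_pow_mem_adjoin (m : ℕ) : (-aR) ^ (m + 1) ∈ Algebra.adjoin ℚ {aR} :=
  pow_mem (neg_mem (Algebra.self_mem_adjoin_singleton ℚ aR)) _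

theorem hornerValue_HR_three : hornerValue (fun m => (-aR) ^ (m + 1)) HR 3 = 0 := by
  calc hornerValue (fun m => (-aR) ^ (m + 1)) HR 3
      = Ideal.Quotient.mk J (HP ^ 3 - aP * HP ^ 2 + aP ^ 2 * HP - aP ^ 3) := by
        simp only [hornerValue, aR, HR, map_sub, map_add, map_mul, map_pow]
        ring
    _ = 0 := Ideal.Quotient.eq_zero_iff_mem.2 (Ideal.subset_span (by simp))

theorem Tz_of_nonneg {p q : ℤ} (hp : 0 ≤ p) (hq : 0 ≤ q) :
    Tz p q = aR ^ p.toNat * HR ^ q.toNat := by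
  rw [← T_eq_pow_mul_pow]
  by_cases hp3 : 3 < p
  · rw [T_eq_pow_mul_pow, pow_eq_zero_of_le (by omega) aR_pow_four, zero_mul, Tz,
      if_pos (.inl hp3)]
  · rw [Tz, if_neg (by omega), T]

theorem Tz_of_neg (p : ℤ) {q : ℤ} (hq : q < 0) : Tz p q = 0 :=
  if_pos (.inr hq)

theorem Tdual_eq_pow_mul_hornerValue {i j : ℕ} (hi : i ≤ 3) (hj : j ≤ 2) :
    Tdual i j = aR ^ (3 - i) * hornerValue (fun m => (-aR) ^ (m + 1)) HR (2 - j) := by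
  have h₃ : ((3 : ℤ) - i).toNat = 3 - i := by omega
  have h₄ : ((4 : ℤ) - i).toNat = 3 - i + 1 := by omega
  have h₅ : ((5 : ℤ) - i).toNat = 3 - i + 2 := by omega
  rw [Tdual, Tz_of_nonneg (p := 3 - i) (by omega) (by omega)]
  interval_cases j
  · rw [Tz_of_nonneg (by omega) (by simp), Tz_of_nonneg (by omega) (by simp), h₃, h₄, h₅]
    simp only [hornerValue, Nat.cast_zero, sub_zero, neg_zero, Int.reduceToNat, Nat.sub_zero]
    ring
  · rw [Tz_of_nonneg (by omega) (by simp), Tz_of_neg _ (by simp), h₃, h₄]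
    simp only [hornerValue, Nat.cast_one, Int.reduceSub, Int.reduceToNat, Nat.reduceSub]
    ring
  · rw [Tz_of_neg _ (by simp), Tz_of_neg _ (by simp), h₃]
    simp [hornerValue]

/-- **Reproducing property of the diagonal class
`∑_{i,j} T_{ij} ⊗ T^{ij} ∈ R ⊗ R`:** for every `x ∈ R`,
`∑_{0 ≤ i ≤ 3, 0 ≤ j ≤ 2} ⟨x, T i j⟩ • Tdual i j = x`, where
`⟨x, y⟩ = Int (x * y)` is the Poincaré pairing. -/
theorem diagonal_class_reproduces
    (hli : LinearIndependent ℚ (fun p : Fin 4 × Fin 3 => T p.1.val p.2.val))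
    (hsp : Submodule.span ℚ (Set.range fun p : Fin 4 × Fin 3 => T p.1.val p.2.val) = ⊤)
    (Int : R →ₗ[ℚ] ℚ)
    (hInt : ∀ i j, i ≤ 3 → j ≤ 2 →
      Int (T i j) = if i = 3 ∧ j = 2 then 1 else 0) :
    ∀ x : R,
      (∑ i ∈ Finset.range 4, ∑ j ∈ Finset.range 3, Int (x * T i j) • Tdual i j) = x := by
  intro x
  simp only [T_eq_pow_mul_pow] at hsp hInt ⊢
  calc ∑ i ∈ Finset.range 4, ∑ j ∈ Finset.range 3, Int (x * (aR ^ i * HR ^ j)) • Tdual i j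
      = ∑ i ∈ Finset.range 4, ∑ j ∈ Finset.range 3, Int (x * (aR ^ i * HR ^ j)) •
          (aR ^ (3 - i) * hornerValue (fun m => (-aR) ^ (m + 1)) HR (2 - j)) :=
        Finset.sum_congr rfl fun i hi => Finset.sum_congr rfl fun j hj => by
          rw [Tdual_eq_pow_mul_hornerValue (Finset.mem_range_succ_iff.1 hi)
            (Finset.mem_range_succ_iff.1 hj)]
    _ = x := diagonal_class_reproduces_general neg_aR_pow_mem_adjoin aR_pow_four
        hornerValue_HR_three hsp hInt x

end
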